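/- The parented a-graph G*_uv (the order-12 a-graph G* obtained by deleting the edge uv of the icosahedron, with the pair (u,v) of opposite boundary vertices designated) does not belong to the family A*: each of the two Kempe equivalence classes of its coloring states contains both a state with c(u) = c(v) and a state with c(u) ≠ c(v), i.e., both classes are n-s classes. -/

import Mathlib

open SimpleGraph

/-- A proper vertex-coloring of `G` using at most 4 colors. -/
def IsProper4Coloring {V : Type} (G : SimpleGraph V) (c : V → Fin 4) : Prop :=
  ∀ a b : V, G.Adj a b → c a ≠ c b

/-- The degree of a vertex, as the number of its neighbours. -/
noncomputable def vdeg {V : Type} (G : SimpleGraph V) (w : V) : ℕ :=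
  (G.neighborSet w).ncard

/-- A (combinatorial) planar triangulation: a connected simple graph together with its
set of triangular faces, every edge lying on exactly two faces, satisfying Euler's
formula `v - e + f = 2`. -/
structure PlanarTriangulation (V : Type) [Fintype V] [DecidableEq V] where
  graph : SimpleGraph V
  connected : graph.Connected
  faces : Finset (Finset V)
  faces_card : ∀ f ∈ faces, f.card = 3
  faces_adj : ∀ f ∈ faces, ∀ a ∈ f, ∀ b ∈ f, a ≠ b → graph.Adj a b
  edge_faces : ∀ a b : V, graph.Adj a b →
    (faces.filter fun f => a ∈ f ∧ b ∈ f).card = 2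
  euler : (Fintype.card V : ℤ) - (graph.edgeSet.ncard : ℤ) + (faces.card : ℤ) = 2

/-- An a-graph: a near-triangulation of the plane whose unique non-triangular face is a
4-face with boundary cycle `u x v y`, the pairs `(x,y)` and `(u,v)` being the two pairs
of opposite (non-adjacent) boundary vertices.  All other faces are triangles, every
edge lies on exactly two faces (boundary edges lie on one triangle and the 4-face), and
Euler's formula holds. -/
structure AGraph (V : Type) [Fintype V] [DecidableEq V] where
  graph : SimpleGraph V
  connected : graph.Connected
  u : V
  x : V
  v : V
  y : V
  adj_ux : graph.Adj u x
  adj_xv : graph.Adj x v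
  adj_vy : graph.Adj v y
  adj_yu : graph.Adj y u
  not_adj_xy : ¬ graph.Adj x y
  not_adj_uv : ¬ graph.Adj u v
  x_ne_y : x ≠ y
  u_ne_v : u ≠ v
  faces : Finset (Finset V)
  faces_card : ∀ f ∈ faces, f.card = 3
  faces_adj : ∀ f ∈ faces, ∀ a ∈ f, ∀ b ∈ f, a ≠ b → graph.Adj a b
  edge_faces : ∀ a b : V, graph.Adj a b →
    (faces.filter fun f => a ∈ f ∧ b ∈ f).card =
      (if ({a, b} : Finset V) ∈ ({{u, x}, {x, v}, {v, y}, {y, u}} : Finset (Finset V))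
        then 1 else 2)
  euler : (Fintype.card V : ℤ) - (graph.edgeSet.ncard : ℤ) + ((faces.card : ℤ) + 1) = 2

/-- A parented a-graph `G_xy` is an a-graph counterexample if in every proper
4-coloring the designated opposite boundary vertices `x` and `y` get the same color. -/
def IsACounterexample {V : Type} [Fintype V] [DecidableEq V] (G : AGraph V) : Prop :=
  ∀ c : V → Fin 4, IsProper4Coloring G.graph c → c G.x = c G.y

/-- A minimal a-graph counterexample: an a-graph counterexample such that no a-graph
counterexample has fewer vertices. -/
def IsMinimalACounterexample {V : Type} [Fintype V] [DecidableEq V] (G : AGraph V) : Prop :=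
  IsACounterexample G ∧
    ∀ (W : Type) [Fintype W] [DecidableEq W] (H : AGraph W),
      IsACounterexample H → Fintype.card V ≤ Fintype.card W

/-- A minimal counterexample to the 4-color conjecture: a planar triangulation with no
proper 4-coloring such that every planar triangulation of lower order has one. -/
def IsMinimal4CTCounterexample {V : Type} [Fintype V] [DecidableEq V]
    (T : PlanarTriangulation V) : Prop :=
  (¬ ∃ c : V → Fin 4, IsProper4Coloring T.graph c) ∧
    ∀ (W : Type) [Fintype W] [DecidableEq W] (S : PlanarTriangulation W),
      Fintype.card W < Fintype.card V → ∃ c : W → Fin 4, IsProper4Coloring S.graph c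

/-- `b` can be reached from `a` by a walk of `G` all of whose vertices lie in `S`. -/
def ReachableWithin {V : Type} (G : SimpleGraph V) (S : Set V) (a b : V) : Prop :=
  ∃ p : G.Walk a b, ∀ w ∈ p.support, w ∈ S

/-- Removing the vertex set `S` from `G` leaves a disconnected graph. -/
def RemovalDisconnects {V : Type} (G : SimpleGraph V) (S : Set V) : Prop :=
  ∃ a b : V, a ∉ S ∧ b ∉ S ∧ ¬ ReachableWithin G Sᶜ a b

/-- `G` has a separating cycle of length `n`. -/
def HasSeparatingCycle {V : Type} (G : SimpleGraph V) (n : ℕ) : Prop :=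
  ∃ (a : V) (p : G.Walk a a), p.IsCycle ∧ p.length = n ∧
    RemovalDisconnects G {w | w ∈ p.support}

/-- A planar triangulation is internally 6-connected if it has minimum degree 5, no
separating 3-cycles or 4-cycles, and whenever a separating 5-cycle is removed, at least
one of the resulting components consists of a single vertex. -/
def Internally6Connected {V : Type} [Fintype V] [DecidableEq V]
    (T : PlanarTriangulation V) : Prop :=
  (∀ w : V, 5 ≤ vdeg T.graph w) ∧
  ¬ HasSeparatingCycle T.graph 3 ∧
  ¬ HasSeparatingCycle T.graph 4 ∧
  ∀ (a : V) (p : T.graph.Walk a a), p.IsCycle → p.length = 5 →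
    RemovalDisconnects T.graph {w | w ∈ p.support} →
    ∃ z : V, z ∉ p.support ∧
      ∀ b : V, b ∉ p.support → ReachableWithin T.graph {w | w ∉ p.support} z b → b = z

/-- The graph of the parent triangulation `G + xy` of an a-graph `G`. -/
def parentXYGraph {V : Type} [Fintype V] [DecidableEq V] (G : AGraph V) : SimpleGraph V :=
  G.graph ⊔ SimpleGraph.fromEdgeSet {s(G.x, G.y)}

/-- The graph of the parent triangulation `G + uv` of an a-graph `G`. -/
def parentUVGraph {V : Type} [Fintype V] [DecidableEq V] (G : AGraph V) : SimpleGraph V :=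
  G.graph ⊔ SimpleGraph.fromEdgeSet {s(G.u, G.v)}

/-- An a-graph is internally 6a-connected if at least one of its two parent
triangulations is internally 6-connected. -/
def Internally6aConnected {V : Type} [Fintype V] [DecidableEq V] (G : AGraph V) : Prop :=
  ∃ T : PlanarTriangulation V,
    (T.graph = parentXYGraph G ∨ T.graph = parentUVGraph G) ∧ Internally6Connected T

/-- A single Kempe exchange: for some pair of distinct colors `j`, `k`, the colors `j`
and `k` are swapped on a non-empty proper subset of the `j`-`k` Kempe chains (a
non-empty union `U` of connected components of the subgraph induced by the vertices
colored `j` or `k`, with `U` not all of them), all other vertices keeping their color. -/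
def KempeStep {V : Type} (G : SimpleGraph V) (c c' : V → Fin 4) : Prop :=
  ∃ j k : Fin 4, j ≠ k ∧ ∃ U : Set V,
    U.Nonempty ∧
    U ⊆ {w | c w = j ∨ c w = k} ∧
    U ≠ {w | c w = j ∨ c w = k} ∧
    (∀ a ∈ U, ∀ b : V, ReachableWithin G {w | c w = j ∨ c w = k} a b → b ∈ U) ∧
    (∀ w ∈ U, c' w = if c w = j then k else j) ∧
    (∀ w : V, w ∉ U → c' w = c w)

/-- The equivalence relation on colorings generated by Kempe exchanges. -/
def KempeEquiv {V : Type} (G : SimpleGraph V) : (V → Fin 4) → (V → Fin 4) → Prop :=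
  Relation.EqvGen (KempeStep G)

/-- For designated vertices `x`, `y`: no Kempe equivalence class of proper 4-colorings
contains both a non-solution state (`c x = c y`) and a solution state (`c x ≠ c y`).
This is the defining property of the family `A*`. -/
def NoNSClass {V : Type} (G : SimpleGraph V) (x y : V) : Prop :=
  ∀ c c' : V → Fin 4, IsProper4Coloring G c → IsProper4Coloring G c' →
    KempeEquiv G c c' → (c x = c y ↔ c' x = c' y)

/-- The coloring state determined by a coloring: the induced partition of the vertex
set into color classes, recorded as the relation of having equal colors.  Two colorings
represent the same state precisely when they have the same `statePart`. -/
def statePart {V : Type} (c : V → Fin 4) : V → V → Prop :=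
  fun a b => c a = c b

/-- The four boundary vertices of an a-graph. -/
def boundaryFinset {V : Type} [Fintype V] [DecidableEq V] (G : AGraph V) : Finset V :=
  {G.u, G.x, G.v, G.y}

/-- The interior vertices of an a-graph: those not on the boundary 4-cycle. -/
def interiorFinset {V : Type} [Fintype V] [DecidableEq V] (G : AGraph V) : Finset V :=
  Finset.univ \ boundaryFinset G

open Classical in
/-- The inner ring of an a-graph: the interior vertices adjacent to some boundary
vertex. -/
noncomputable def innerRingFinset {V : Type} [Fintype V] [DecidableEq V]
    (G : AGraph V) : Finset V :=
  (interiorFinset G).filter fun w => ∃ b ∈ boundaryFinset G, G.graph.Adj w b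

/-- `G` belongs to the family `G(m,n)`: its inner ring has order `n` and encloses `m`
further interior vertices. -/
def InFamilyG {V : Type} [Fintype V] [DecidableEq V] (G : AGraph V) (m n : ℕ) : Prop :=
  (innerRingFinset G).card = n ∧ (interiorFinset G \ innerRingFinset G).card = m

/-- The icosahedron, the unique 5-regular planar triangulation, on 12 vertices. -/
def icosG : SimpleGraph (Fin 12) :=
  SimpleGraph.fromEdgeSet
    {s(0, 1), s(0, 2), s(0, 3), s(0, 4), s(0, 5),
     s(1, 2), s(2, 3), s(3, 4), s(4, 5), s(5, 1),
     s(11, 6), s(11, 7), s(11, 8), s(11, 9), s(11, 10),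
     s(6, 7), s(7, 8), s(8, 9), s(9, 10), s(10, 6),
     s(1, 6), s(1, 10), s(2, 6), s(2, 7), s(3, 7),
     s(3, 8), s(4, 8), s(4, 9), s(5, 9), s(5, 10)}

/-- The order-12 a-graph `G*`: the icosahedron with the edge `uv = {0,1}` deleted.
Its boundary 4-cycle is `u x v y = 0 2 1 5`, so `(x, y) = (2, 5)` and
`(u, v) = (0, 1)` are the two pairs of opposite boundary vertices. -/
def gstarG : SimpleGraph (Fin 12) := icosG.deleteEdges {s(0, 1)}

/-- The boundary vertex `u` of `G*`. -/
def gstarU : Fin 12 := 0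
/-- The boundary vertex `v` of `G*`. -/
def gstarV : Fin 12 := 1
/-- The boundary vertex `x` of `G*`. -/
def gstarX : Fin 12 := 2
/-- The boundary vertex `y` of `G*`. -/
def gstarY : Fin 12 := 5


/-- bit test through kernel-accelerated primitives -/
def kBit (x i : ℕ) : Bool := Nat.beq (Nat.land (Nat.shiftRight x i) (nat_lit 1)) (nat_lit 1)

/-- are two masks disjoint -/
def kDisj (x y : ℕ) : Bool := Nat.beq (Nat.land x y) (nat_lit 0)

/-- neighbours of `i`, as a bit mask -/
def kNb (i : ℕ) : ℕ :=
  Nat.land (Nat.shiftRight (nat_lit 10805457639340616869195767250808501889810492) (Nat.mul (nat_lit 12) i)) (nat_lit 4095)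

/-- neighbours of `i` below `i`, as a bit mask -/
def kLow (i : ℕ) : ℕ :=
  Nat.land (Nat.shiftRight (nat_lit 10802734383281383845809880740342970332479488) (Nat.mul (nat_lit 12) i)) (nat_lit 4095)

/-- mask of the color class `k` -/
def kCls (p q k : ℕ) : ℕ :=
  Nat.land (cond (kBit k (nat_lit 0)) p (Nat.xor (nat_lit 4095) p))
    (cond (kBit k (nat_lit 1)) q (Nat.xor (nat_lit 4095) q))

def kVerts : List ℕ :=
  [nat_lit 0, nat_lit 1, nat_lit 2, nat_lit 3, nat_lit 4, nat_lit 5, nat_lit 6, nat_lit 7,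
   nat_lit 8, nat_lit 9, nat_lit 10, nat_lit 11]

/-- growing a chain along a list of vertices -/
def kGrow (S : ℕ) : List ℕ → ℕ → ℕ
  | [], u => u
  | i :: l, u => kGrow S l (cond (kBit S i)
      (cond (kDisj (kNb i) u) u (Nat.lor u (Nat.shiftLeft (nat_lit 1) i))) u)

def kSweep (S u : ℕ) : ℕ := kGrow S kVerts u

def kComp (S s : ℕ) : ℕ :=
  kSweep S (kSweep S (kSweep S (kSweep S (Nat.shiftLeft (nat_lit 1) s))))

def kClosed (S u : ℕ) : List ℕ → Bool
  | [] => true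
  | i :: l => cond (kBit S i)
      (cond (kDisj (kNb i) u) (kClosed S u l) (cond (kBit u i) (kClosed S u l) false))
      (kClosed S u l)

def kSwap (x : ℕ × ℕ) (d u : ℕ) : ℕ × ℕ :=
  (cond (kBit d (nat_lit 0)) (Nat.xor x.1 u) x.1,
   cond (kBit d (nat_lit 1)) (Nat.xor x.2 u) x.2)

def kTry (x : ℕ × ℕ) (d S u : ℕ) : ℕ × ℕ :=
  cond (Nat.beq u S) x (cond (Nat.beq (Nat.land u S) u)
    (cond (kClosed S u kVerts) (kSwap x d u) x) x)

def kMove (x : ℕ × ℕ) (s j k : ℕ) : ℕ × ℕ :=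
  cond (kBit (kCls x.1 x.2 j) s)
    (kTry x (Nat.xor j k) (Nat.lor (kCls x.1 x.2 j) (kCls x.1 x.2 k))
      (kComp (Nat.lor (kCls x.1 x.2 j) (kCls x.1 x.2 k)) s)) x

/-- the word, a move being coded as `16 * s + 4 * j + k` -/
def kWord1 : List ℕ :=
  [nat_lit 1, nat_lit 13, nat_lit 6, nat_lit 2, nat_lit 11, nat_lit 19, nat_lit 3, nat_lit 30,
   nat_lit 18, nat_lit 25, nat_lit 17, nat_lit 29, nat_lit 188, nat_lit 9, nat_lit 184, nat_lit
   177, nat_lit 110]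

def kWord2 : List ℕ :=
  [nat_lit 136, nat_lit 131, nat_lit 45, nat_lit 27, nat_lit 134, nat_lit 136, nat_lit 179,
   nat_lit 189, nat_lit 13, nat_lit 182, nat_lit 190, nat_lit 140, nat_lit 75, nat_lit 130,
   nat_lit 180, nat_lit 88, nat_lit 78, nat_lit 178, nat_lit 34, nat_lit 51, nat_lit 161,
   nat_lit 73, nat_lit 8, nat_lit 4, nat_lit 38, nat_lit 185, nat_lit 46, nat_lit 93, nat_lit
   20, nat_lit 131, nat_lit 19, nat_lit 2, nat_lit 43, nat_lit 102, nat_lit 9, nat_lit 7,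
   nat_lit 81, nat_lit 3, nat_lit 130, nat_lit 6, nat_lit 98, nat_lit 54, nat_lit 13, nat_lit
   1, nat_lit 20, nat_lit 8, nat_lit 4, nat_lit 9, nat_lit 50, nat_lit 44, nat_lit 119, nat_lit
   7, nat_lit 86]

def kRun : List ℕ → ℕ × ℕ → ℕ × ℕ
  | [], x => x
  | m :: l, x => kRun l (kMove x (Nat.shiftRight m (nat_lit 4))
      (Nat.land (Nat.shiftRight m (nat_lit 2)) (nat_lit 3)) (Nat.land m (nat_lit 3)))

/-- do vertices 2 and 5 have the same color -/
def kEqb (p q : ℕ) : Bool :=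
  cond (kBit (Nat.xor p (Nat.shiftRight p (nat_lit 3))) (nat_lit 2)) false
    (cond (kBit (Nat.xor q (Nat.shiftRight q (nat_lit 3))) (nat_lit 2)) false true)

def kLink (S : ℕ) : Bool :=
  cond (kBit S (nat_lit 2)) (cond (kBit S (nat_lit 5)) (kBit (kComp S (nat_lit 2)) (nat_lit 5)) true) true

def kLinkP (p q j k : ℕ) : Bool := kLink (Nat.lor (kCls p q j) (kCls p q k))

def kLinks (p q : ℕ) : Bool :=
  cond (kLinkP p q (nat_lit 0) (nat_lit 1)) (
  cond (kLinkP p q (nat_lit 0) (nat_lit 2)) (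
  cond (kLinkP p q (nat_lit 0) (nat_lit 3)) (
  cond (kLinkP p q (nat_lit 1) (nat_lit 2)) (
  cond (kLinkP p q (nat_lit 1) (nat_lit 3)) (
  kLinkP p q (nat_lit 2) (nat_lit 3)) false) false) false) false) false

def kPairEq (x y : ℕ × ℕ) : Bool := cond (Nat.beq x.1 y.1) (Nat.beq x.2 y.2) false

/-- the images of the colorings in the first class under the first word -/
def kListA : List (ℕ × ℕ) :=
  [(nat_lit 745, nat_lit 2707), (nat_lit 993, nat_lit 2699), (nat_lit 1385, nat_lit 1923),
   (nat_lit 1505, nat_lit 1675), (nat_lit 1675, nat_lit 1384), (nat_lit 1675, nat_lit 3100),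
   (nat_lit 1685, nat_lit 2699), (nat_lit 1687, nat_lit 963), (nat_lit 1687, nat_lit 1364),
   (nat_lit 1923, nat_lit 1384), (nat_lit 1923, nat_lit 3348), (nat_lit 1925, nat_lit 2707),
   (nat_lit 1927, nat_lit 723), (nat_lit 1927, nat_lit 1364), (nat_lit 2170, nat_lit 1388),
   (nat_lit 2172, nat_lit 747), (nat_lit 2410, nat_lit 1396), (nat_lit 2420, nat_lit 995),
   (nat_lit 2699, nat_lit 2408), (nat_lit 2707, nat_lit 2168), (nat_lit 2711, nat_lit 747),
   (nat_lit 2711, nat_lit 995), (nat_lit 2711, nat_lit 3100), (nat_lit 2711, nat_lit 3348),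
   (nat_lit 2731, nat_lit 723), (nat_lit 2731, nat_lit 963), (nat_lit 2731, nat_lit 1687),
   (nat_lit 2731, nat_lit 1927), (nat_lit 2731, nat_lit 2168), (nat_lit 2731, nat_lit 2408),
   (nat_lit 3102, nat_lit 1396), (nat_lit 3132, nat_lit 1687), (nat_lit 3221, nat_lit 1675),
   (nat_lit 3349, nat_lit 1923), (nat_lit 3350, nat_lit 1388), (nat_lit 3372, nat_lit 1927)]

/-- the images of the colorings in the second class under the first word -/
def kListB : List (ℕ × ℕ) :=
  [(nat_lit 843, nat_lit 2668), (nat_lit 1427, nat_lit 843), (nat_lit 1427, nat_lit 3252),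
   (nat_lit 1445, nat_lit 3219), (nat_lit 1737, nat_lit 3219), (nat_lit 1865, nat_lit 1427),
   (nat_lit 2343, nat_lit 843), (nat_lit 2343, nat_lit 876), (nat_lit 2343, nat_lit 1460),
   (nat_lit 2343, nat_lit 2635), (nat_lit 2343, nat_lit 2668), (nat_lit 2343, nat_lit 3252),
   (nat_lit 2635, nat_lit 876), (nat_lit 2635, nat_lit 1752), (nat_lit 3219, nat_lit 1460),
   (nat_lit 3219, nat_lit 1752), (nat_lit 3219, nat_lit 2635), (nat_lit 3365, nat_lit 1427)]

def kRootA : ℕ × ℕ := (nat_lit 963, nat_lit 2731)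

def kRootB : ℕ × ℕ := (nat_lit 1427, nat_lit 843)

def kMem (x : ℕ × ℕ) : List (ℕ × ℕ) → Bool
  | [] => false
  | y :: l => cond (kPairEq x y) true (kMem x l)

def kAllTo (r : ℕ × ℕ) : List (ℕ × ℕ) → Bool
  | [] => true
  | y :: l => cond (kPairEq (kRun kWord2 y) r) (kAllTo r l) false

def kFinal (p q : ℕ) : Bool :=
  cond (kLinks p q) (kMem (kRun kWord1 (p, q)) (cond (kEqb p q) kListB kListA)) false

def kSet (p n k b : ℕ) : ℕ := cond (kBit k b) (Nat.lor p (Nat.shiftLeft (nat_lit 1) n)) p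

/-- extend a partial coloring of the vertices below `n` in all possible ways -/
def kChk : ℕ → ℕ → ℕ → ℕ → Bool
  | 0, _, p, q => kFinal p q
  | f + 1, n, p, q =>
    let g : ℕ → Bool := fun k => cond (kDisj (kLow n) (kCls p q k))
      (kChk f (Nat.succ n) (kSet p n k (nat_lit 0)) (kSet q n k (nat_lit 1))) true
    cond (g (nat_lit 0)) (cond (g (nat_lit 1)) (cond (g (nat_lit 2))
      (g (nat_lit 3)) false) false) false

theorem kChk_true : kChk 12 0 0 0 = true := by decide +kernel

theorem kAllToA : kAllTo kRootA kListA = true := by decide +kernel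

theorem kAllToB : kAllTo kRootB kListB = true := by decide +kernel

theorem kBit_eq (x i : ℕ) : kBit x i = x.testBit i := by
  have h : kBit x i = Nat.beq ((x >>> i) &&& 1) 1 := rfl
  rw [h, Nat.and_one_is_mod, Nat.testBit_eq_decide_div_mod_eq, Nat.shiftRight_eq_div_pow]
  rw [Bool.eq_iff_iff, Nat.beq_eq]
  simp

theorem kDisj_iff (x y : ℕ) :
    kDisj x y = true ↔ ∀ i, x.testBit i = true → y.testBit i = true → False := by
  have h : kDisj x y = Nat.beq (x &&& y) 0 := rfl
  rw [h, Nat.beq_eq]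
  constructor
  · intro h0 i hx hy
    have := congrArg (fun z => z.testBit i) h0
    simp [hx, hy] at this
  · intro h0
    apply Nat.eq_of_testBit_eq
    intro i
    rw [Nat.testBit_and, Nat.zero_testBit]
    by_contra hc
    have hc' := Bool.eq_true_of_not_eq_false hc
    rw [Bool.and_eq_true] at hc'
    exact h0 i hc'.1 hc'.2

theorem kAdj (a b : Fin 12) : gstarG.Adj a b ↔ (kNb b).testBit a = true := by
  rw [← kBit_eq]
  unfold gstarG icosG
  rw [SimpleGraph.deleteEdges_adj, SimpleGraph.fromEdgeSet_adj]
  simp only [Set.mem_insert_iff, Set.mem_singleton_iff]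
  revert a b
  decide +kernel

theorem kNb_lt (b i : ℕ) (h : (kNb b).testBit i = true) : i < 12 := by
  have h1 : kNb b = ((10805457639340616869195767250808501889810492 >>> (12 * b)) &&& (2 ^ 12 - 1) : ℕ) := rfl
  rw [h1, Nat.testBit_and, Nat.testBit_two_pow_sub_one] at h
  simp at h
  exact h.2

theorem kLow_lt (b i : ℕ) (h : (kLow b).testBit i = true) : i < 12 := by
  have h1 : kLow b = ((10802734383281383845809880740342970332479488 >>> (12 * b)) &&& (2 ^ 12 - 1) : ℕ) := rfl
  rw [h1, Nat.testBit_and, Nat.testBit_two_pow_sub_one] at h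
  simp at h
  exact h.2

theorem kLow_adj (a b : Fin 12) (h : (kLow b).testBit a = true) :
    a.val < b.val ∧ gstarG.Adj a b := by
  rw [kAdj]
  rw [← kBit_eq] at *
  revert a b
  decide +kernel

theorem kFull (i : ℕ) : (4095 : ℕ).testBit i = decide (i < 12) := by
  have : (4095 : ℕ) = 2 ^ 12 - 1 := by norm_num
  rw [this, Nat.testBit_two_pow_sub_one]

theorem kCls_bit (p q k i : ℕ) : (kCls p q k).testBit i =
    ((bif k.testBit 0 then p.testBit i else (decide (i < 12) ^^ p.testBit i)) &&
     (bif k.testBit 1 then q.testBit i else (decide (i < 12) ^^ q.testBit i))) := by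
  have h : kCls p q k = ((bif kBit k 0 then p else 4095 ^^^ p) &&&
     (bif kBit k 1 then q else 4095 ^^^ q) : ℕ) := rfl
  rw [h, Nat.testBit_and, kBit_eq, kBit_eq]
  cases k.testBit 0 <;> cases k.testBit 1 <;> simp only [cond_true, cond_false, Nat.testBit_xor, kFull]

theorem kCls_eq (p q i : ℕ) (hi : i < 12) (e k : Fin 4)
    (hp : p.testBit i = e.val.testBit 0) (hq : q.testBit i = e.val.testBit 1) :
    (kCls p q k).testBit i = decide (e = k) := by
  rw [kCls_bit, hp, hq]
  simp only [hi, decide_true]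
  clear hp hq
  revert e k
  decide

theorem kCls_out (p q k i : ℕ) (hi : ¬ i < 12)
    (hp : p.testBit i = false) (hq : q.testBit i = false) :
    (kCls p q k).testBit i = false := by
  rw [kCls_bit, hp, hq]
  simp [hi]

def kCb (c : Fin 12 → Fin 4) (b i : ℕ) : Bool :=
  if h : i < 12 then (c ⟨i, h⟩).val.testBit b else false

def kRep (c : Fin 12 → Fin 4) (x : ℕ × ℕ) : Prop :=
  ∀ i : ℕ, x.1.testBit i = kCb c 0 i ∧ x.2.testBit i = kCb c 1 i

theorem kCb_lt (c : Fin 12 → Fin 4) (b : ℕ) (i : Fin 12) : kCb c b i = (c i).val.testBit b := by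
  simp [kCb]

theorem kRep_cls {c : Fin 12 → Fin 4} {x : ℕ × ℕ} (h : kRep c x) (i : Fin 12) (k : Fin 4) :
    (kCls x.1 x.2 k).testBit i = decide (c i = k) := by
  apply kCls_eq _ _ _ i.isLt
  · rw [(h i).1, kCb_lt]
  · rw [(h i).2, kCb_lt]

theorem kRep_out {c : Fin 12 → Fin 4} {x : ℕ × ℕ} (h : kRep c x) (i : ℕ) (hi : ¬ i < 12) (k : ℕ) :
    (kCls x.1 x.2 k).testBit i = false := by
  apply kCls_out _ _ _ _ hi
  · rw [(h i).1]; simp [kCb, hi]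
  · rw [(h i).2]; simp [kCb, hi]

theorem kRep_inj {c d : Fin 12 → Fin 4} {x : ℕ × ℕ} (hc : kRep c x) (hd : kRep d x) : c = d := by
  funext i
  have h1 := (hc i).1.symm.trans (hd i).1
  have h2 := (hc i).2.symm.trans (hd i).2
  rw [kCb_lt, kCb_lt] at h1 h2
  generalize c i = a at *
  generalize d i = b at *
  revert a b
  decide

theorem kClosed_iff (S u : ℕ) (l : List ℕ) : kClosed S u l = true ↔
    ∀ i ∈ l, S.testBit i = true → ∀ a, (kNb i).testBit a = true → u.testBit a = true →
      u.testBit i = true := by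
  induction l with
  | nil => simp [kClosed]
  | cons i l ih =>
    have hd := kDisj_iff (kNb i) u
    rw [List.forall_mem_cons, ← ih]
    simp only [kClosed, kBit_eq]
    cases hS : S.testBit i
    · simp
    · cases hD : kDisj (kNb i) u
      · rw [hD] at hd
        cases hu : u.testBit i
        · simp only [cond_true, cond_false, Bool.false_eq_true, false_iff, not_and]
          intro h
          exfalso
          simp only [Bool.false_eq_true, false_iff] at hd
          apply hd
          intro a h1 h2
          exact h trivial a h1 h2
        · simp
      · rw [hD] at hd
        have hd' := hd.1 rfl
        simp only [cond_true]
        constructor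
        · intro h
          exact ⟨fun _ a h1 h2 => (hd' a h1 h2).elim, h⟩
        · exact fun h => h.2

theorem kVerts_mem (i : Fin 12) : i.val ∈ kVerts := by
  revert i; decide

theorem kReach {S U : Set (Fin 12)}
    (hU : ∀ a ∈ U, ∀ b, gstarG.Adj a b → b ∈ S → b ∈ U) (a b : Fin 12) (ha : a ∈ U)
    (h : ReachableWithin gstarG S a b) : b ∈ U := by
  obtain ⟨p, hp⟩ := h
  induction p with
  | nil => exact ha
  | cons h p ih =>
    rename_i x y z
    have hy : y ∈ S := hp y (by simp)
    exact ih (hU _ ha _ h hy) (fun w hw => hp w (by simp [hw]))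

theorem kSwapBit (j k e : Fin 4) (he : e = j ∨ e = k) :
    ((if e = j then k else j : Fin 4).val.testBit 0 =
      bif (j.val ^^^ k.val).testBit 0 then (e.val.testBit 0 ^^ true) else e.val.testBit 0) ∧
    ((if e = j then k else j : Fin 4).val.testBit 1 =
      bif (j.val ^^^ k.val).testBit 1 then (e.val.testBit 1 ^^ true) else e.val.testBit 1) := by
  revert j k e
  decide

theorem kTry_ok {c : Fin 12 → Fin 4} {x : ℕ × ℕ} (h : kRep c x) (j k : Fin 4) (hjk : j ≠ k)
    (S u : ℕ) (hS : S = kCls x.1 x.2 j ||| kCls x.1 x.2 k) :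
    ∃ c', KempeEquiv gstarG c c' ∧ kRep c' (kTry x (j.val ^^^ k.val) S u) := by
  have triv : ∃ c', KempeEquiv gstarG c c' ∧ kRep c' x := ⟨c, Relation.EqvGen.refl _, h⟩
  have hSb : ∀ i : Fin 12, S.testBit i = true ↔ (c i = j ∨ c i = k) := by
    intro i
    rw [hS, Nat.testBit_or, kRep_cls h, kRep_cls h]
    simp
  have hSo : ∀ i, ¬ i < 12 → S.testBit i = false := by
    intro i hi
    rw [hS, Nat.testBit_or, kRep_out h i hi, kRep_out h i hi]
    rfl
  unfold kTry
  cases h1 : Nat.beq u S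
  swap
  · exact triv
  cases h2 : Nat.beq (Nat.land u S) u
  · exact triv
  cases h3 : kClosed S u kVerts
  · exact triv
  simp only [cond_true, cond_false]
  have h1' : u ≠ S := by
    intro he
    rw [he] at h1
    simp at h1
  have h2' : u &&& S = u := Nat.eq_of_beq_eq_true h2
  rw [kClosed_iff] at h3
  have hsub : ∀ i, u.testBit i = true → S.testBit i = true := by
    intro i hi
    rw [← h2', Nat.testBit_and, Bool.and_eq_true] at hi
    exact hi.2
  have huo : ∀ i, ¬ i < 12 → u.testBit i = false := by
    intro i hi
    by_contra hc
    have := hsub i (Bool.eq_true_of_not_eq_false hc)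
    rw [hSo i hi] at this
    cases this
  have hsw : kSwap x (j.val ^^^ k.val) u =
    (bif (j.val ^^^ k.val).testBit 0 then x.1 ^^^ u else x.1,
     bif (j.val ^^^ k.val).testBit 1 then x.2 ^^^ u else x.2) := by
    rw [← kBit_eq, ← kBit_eq]; rfl
  rw [hsw]
  by_cases hu0 : u = 0
  · refine ⟨c, Relation.EqvGen.refl _, ?_⟩
    subst hu0
    simpa using h
  refine ⟨fun i => if u.testBit i = true then (if c i = j then k else j) else c i, ?_, ?_⟩
  · apply Relation.EqvGen.rel
    refine ⟨j, k, hjk, {w | u.testBit w = true}, ?_, ?_, ?_, ?_, ?_, ?_⟩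
    · obtain ⟨i, hi⟩ := Nat.exists_testBit_of_ne_zero hu0
      have hlt : i < 12 := by
        by_contra hc
        rw [huo i hc] at hi
        cases hi
      exact ⟨⟨i, hlt⟩, hi⟩
    · intro w hw
      exact (hSb w).1 (hsub w hw)
    · intro he
      apply h1'
      apply Nat.eq_of_testBit_eq
      intro i
      by_cases hi : i < 12
      · have := Set.ext_iff.1 he ⟨i, hi⟩
        rw [Set.mem_ofPred_eq, Set.mem_ofPred_eq, ← hSb] at this
        rw [Bool.eq_iff_iff]
        exact this
      · rw [huo i hi, hSo i hi]
    · intro a ha b hb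
      refine kReach ?_ a b ha hb
      intro a' ha' b' hab hb'
      exact h3 b' (kVerts_mem b') ((hSb b').2 hb') a' ((kAdj a' b').1 hab) ha'
    · intro w hw
      exact if_pos hw
    · intro w hw
      exact if_neg hw
  · intro i
    by_cases hi : i < 12
    · have hb : ∀ b, kCb c b i = (c ⟨i, hi⟩).val.testBit b := fun b => kCb_lt c b ⟨i, hi⟩
      have hx := h i
      rw [hb, hb] at hx
      simp only [kCb, hi, dite_true]
      have hcs := (hSb ⟨i, hi⟩)
      cases hui : u.testBit i
      · simp only [Bool.false_eq_true, if_false]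
        rw [← hx.1, ← hx.2]
        constructor
        · cases (j.val ^^^ k.val).testBit 0 <;> simp [hui]
        · cases (j.val ^^^ k.val).testBit 1 <;> simp [hui]
      · have hsb := kSwapBit j k (c ⟨i, hi⟩) (hcs.1 (hsub i hui))
        simp only [if_true]
        rw [hsb.1, hsb.2, ← hx.1, ← hx.2]
        constructor
        · cases (j.val ^^^ k.val).testBit 0 <;> simp [hui]
        · cases (j.val ^^^ k.val).testBit 1 <;> simp [hui]
    · have hx := h i
      simp only [kCb, hi, dite_false] at hx ⊢
      constructor
      · cases (j.val ^^^ k.val).testBit 0 <;> simp [huo i hi, hx.1]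
      · cases (j.val ^^^ k.val).testBit 1 <;> simp [huo i hi, hx.2]

theorem kMove_ok {c : Fin 12 → Fin 4} {x : ℕ × ℕ} (h : kRep c x) (s : ℕ) (j k : Fin 4) :
    ∃ c', KempeEquiv gstarG c c' ∧ kRep c' (kMove x s j k) := by
  unfold kMove
  cases kBit (kCls x.1 x.2 j) s
  · exact ⟨c, Relation.EqvGen.refl _, h⟩
  · simp only [cond_true]
    by_cases hjk : j = k
    · refine ⟨c, Relation.EqvGen.refl _, ?_⟩
      subst hjk
      have hx : Nat.xor j.val j.val = 0 := Nat.xor_self _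
      have hs : ∀ u, kSwap x 0 u = x := by
        intro u
        rfl
      rw [hx]
      unfold kTry
      rw [hs]
      simpa using h
    · exact kTry_ok h j k hjk _ _ rfl

theorem kRun_ok (l : List ℕ) {c : Fin 12 → Fin 4} {x : ℕ × ℕ} (h : kRep c x) :
    ∃ c', KempeEquiv gstarG c c' ∧ kRep c' (kRun l x) := by
  induction l generalizing c x with
  | nil => exact ⟨c, Relation.EqvGen.refl _, h⟩
  | cons m l ih =>
    have h1 : (m >>> 2) &&& 3 < 4 := Nat.lt_succ_of_le Nat.and_le_right
    have h2 : m &&& 3 < 4 := Nat.lt_succ_of_le Nat.and_le_right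
    obtain ⟨c1, e1, r1⟩ := kMove_ok h (m >>> 4) ⟨_, h1⟩ ⟨_, h2⟩
    obtain ⟨c2, e2, r2⟩ := ih r1
    exact ⟨c2, Relation.EqvGen.trans _ _ _ e1 e2, r2⟩

theorem kGrow_sub (S : ℕ) (T : Set ℕ)
    (hT : ∀ i a, S.testBit i = true → (kNb i).testBit a = true → a ∈ T → i ∈ T)
    (l : List ℕ) (u : ℕ) (hu : ∀ i, u.testBit i = true → i ∈ T) :
    ∀ i, (kGrow S l u).testBit i = true → i ∈ T := by
  induction l generalizing u with
  | nil => exact hu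
  | cons v l ih =>
    simp only [kGrow]
    apply ih
    rw [kBit_eq]
    cases hS : S.testBit v
    · exact hu
    · cases hD : kDisj (kNb v) u
      · simp only [cond_true, cond_false]
        have hv : v ∈ T := by
          by_contra hv
          have : kDisj (kNb v) u = true := by
            rw [kDisj_iff]
            intro a h1 h2
            exact hv (hT v a hS h1 (hu a h2))
          rw [hD] at this
          cases this
        intro i hi
        have hi' : (u ||| 1 <<< v).testBit i = true := hi
        rw [Nat.testBit_or, Bool.or_eq_true] at hi'
        rcases hi' with hi' | hi'
        · exact hu i hi'
        · rw [Nat.one_shiftLeft, Nat.testBit_two_pow] at hi'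
          simp at hi'
          exact hi' ▸ hv
      · exact hu

theorem kComp_sub (S s : ℕ) (T : Set ℕ)
    (hT : ∀ i a, S.testBit i = true → (kNb i).testBit a = true → a ∈ T → i ∈ T)
    (hs : s ∈ T) : ∀ i, (kComp S s).testBit i = true → i ∈ T := by
  unfold kComp kSweep
  apply kGrow_sub S T hT
  apply kGrow_sub S T hT
  apply kGrow_sub S T hT
  apply kGrow_sub S T hT
  intro i hi
  have hi' : (1 <<< s).testBit i = true := hi
  rw [Nat.one_shiftLeft, Nat.testBit_two_pow] at hi'
  simp at hi'
  exact hi' ▸ hs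

theorem kLinks_all (p q : ℕ) (h : kLinks p q = true) (j k : Fin 4) (hjk : j ≠ k) :
    kLinkP p q j k = true := by
  have hc : ∀ a b : ℕ, kLinkP p q a b = kLinkP p q b a := by
    intro a b
    unfold kLinkP
    congr 1
    exact Nat.lor_comm _ _
  have hcond : ∀ a b : Bool, cond a b false = true ↔ a = true ∧ b = true := by decide
  unfold kLinks at h
  simp only [hcond] at h
  obtain ⟨h01, h02, h03, h12, h13, h23⟩ := h
  fin_cases j <;> fin_cases k <;>
    first
    | exact absurd rfl hjk
    | exact h01
    | exact h02
    | exact h03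
    | exact h12
    | exact h13
    | exact h23
    | exact (hc _ _).trans h01
    | exact (hc _ _).trans h02
    | exact (hc _ _).trans h03
    | exact (hc _ _).trans h12
    | exact (hc _ _).trans h13
    | exact (hc _ _).trans h23

theorem kLink_half {c : Fin 12 → Fin 4} {x : ℕ × ℕ} (h : kRep c x)
    (hl : kLinks x.1 x.2 = true) (j k : Fin 4) (hjk : j ≠ k)
    (h2 : c 2 = j ∨ c 2 = k) (h5 : c 5 = j ∨ c 5 = k) (U : Set (Fin 12))
    (hU : ∀ a ∈ U, ∀ b, gstarG.Adj a b → (c b = j ∨ c b = k) → b ∈ U)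
    (hm : (2 : Fin 12) ∈ U) : (5 : Fin 12) ∈ U := by
  have hL := kLinks_all _ _ hl j k hjk
  unfold kLinkP kLink at hL
  set S : ℕ := Nat.lor (kCls x.1 x.2 j) (kCls x.1 x.2 k) with hS
  have hS' : S = kCls x.1 x.2 j ||| kCls x.1 x.2 k := rfl
  have hSb : ∀ i : Fin 12, S.testBit i = true ↔ (c i = j ∨ c i = k) := by
    intro i
    rw [hS', Nat.testBit_or, kRep_cls h, kRep_cls h]
    simp
  have hSo : ∀ i, ¬ i < 12 → S.testBit i = false := by
    intro i hi
    rw [hS', Nat.testBit_or, kRep_out h i hi, kRep_out h i hi]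
    rfl
  have e2 : S.testBit 2 = true := (hSb 2).2 h2
  have e5 : S.testBit 5 = true := (hSb 5).2 h5
  simp only [kBit_eq] at hL
  rw [e2, e5] at hL
  simp only [cond_true] at hL
  have := kComp_sub S 2 {i | ∃ hi : i < 12, (⟨i, hi⟩ : Fin 12) ∈ U} ?_ ⟨by norm_num, hm⟩ 5 hL
  · obtain ⟨_, h⟩ := this
    exact h
  · rintro i a hi ha ⟨ha', haU⟩
    have hi' : i < 12 := by
      by_contra hc
      rw [hSo i hc] at hi
      cases hi
    refine ⟨hi', hU _ haU _ ((kAdj ⟨a, ha'⟩ ⟨i, hi'⟩).2 ha) ((hSb ⟨i, hi'⟩).1 hi)⟩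

theorem kLink_iff {c : Fin 12 → Fin 4} {x : ℕ × ℕ} (h : kRep c x)
    (hl : kLinks x.1 x.2 = true) (j k : Fin 4) (hjk : j ≠ k)
    (h2 : c 2 = j ∨ c 2 = k) (h5 : c 5 = j ∨ c 5 = k) (U : Set (Fin 12))
    (hsub : ∀ a ∈ U, c a = j ∨ c a = k)
    (hU : ∀ a ∈ U, ∀ b, gstarG.Adj a b → (c b = j ∨ c b = k) → b ∈ U) :
    (2 : Fin 12) ∈ U ↔ (5 : Fin 12) ∈ U := by
  refine ⟨kLink_half h hl j k hjk h2 h5 U hU, ?_⟩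
  intro hm
  by_contra hn
  have := kLink_half h hl j k hjk h2 h5 {a | (c a = j ∨ c a = k) ∧ a ∉ U} ?_ ⟨h2, hn⟩
  · exact this.2 hm
  · rintro a ⟨ha, haU⟩ b hab hb
    exact ⟨hb, fun hbU => haU (hU b hbU a hab.symm ha)⟩

theorem kChk_ok (c : Fin 12 → Fin 4) (hc : IsProper4Coloring gstarG c) (f n p q : ℕ)
    (hn : n + f = 12)
    (hi : ∀ i, p.testBit i = (decide (i < n) && kCb c 0 i) ∧
      q.testBit i = (decide (i < n) && kCb c 1 i))
    (h : kChk f n p q = true) :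
    ∃ x, kRep c x ∧ kFinal x.1 x.2 = true := by
  induction f generalizing n p q with
  | zero =>
    have hn' : n = 12 := by omega
    subst hn'
    refine ⟨(p, q), ?_, h⟩
    intro i
    rw [(hi i).1, (hi i).2]
    by_cases h12 : i < 12
    · simp [h12]
    · simp [h12, kCb]
  | succ f ih =>
    have hcond : ∀ a b : Bool, cond a b false = true ↔ a = true ∧ b = true := by decide
    have hn12 : n < 12 := by omega
    obtain ⟨N, hN⟩ : ∃ N : Fin 12, N.val = n := ⟨⟨n, hn12⟩, rfl⟩
    have key : ∀ k : Fin 4, cond (kDisj (kLow n) (kCls p q k))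
      (kChk f (Nat.succ n) (kSet p n k (nat_lit 0)) (kSet q n k (nat_lit 1))) true = true := by
      unfold kChk at h
      simp only [hcond] at h
      obtain ⟨g0, g1, g2, g3⟩ := h
      intro k
      fin_cases k
      · exact g0
      · exact g1
      · exact g2
      · exact g3
    have hk := key (c N)
    have hd : kDisj (kLow n) (kCls p q (c N)) = true := by
      rw [kDisj_iff]
      intro i h1 h2
      have hi12 := kLow_lt _ _ h1
      have hadj := kLow_adj ⟨i, hi12⟩ N (by rw [hN]; exact h1)
      have hin : i < n := hN ▸ hadj.1
      have hcb : ∀ b, kCb c b i = (c ⟨i, hi12⟩).val.testBit b := fun b => kCb_lt c b ⟨i, hi12⟩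
      rw [kCls_eq p q i hi12 (c ⟨i, hi12⟩) (c N)
        (by rw [(hi i).1, hcb]; simp [hin]) (by rw [(hi i).2, hcb]; simp [hin])] at h2
      exact hc _ _ hadj.2 (of_decide_eq_true h2)
    rw [hd, cond_true] at hk
    refine ih (n + 1) _ _ (by omega) ?_ hk
    have hset : ∀ (p b : ℕ), (∀ i, p.testBit i = (decide (i < n) && kCb c b i)) →
        ∀ i, (kSet p n (c N) b).testBit i = (decide (i < n + 1) && kCb c b i) := by
      intro p b hp i
      have hs : kSet p n (c N) b = bif kBit (c N) b then p ||| (1 <<< n) else p := rfl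
      have hcn : kCb c b n = (c N).val.testBit b := by rw [← hN, kCb_lt]
      rw [hs, kBit_eq]
      by_cases hin : i = n
      · subst hin
        have hpi := hp i
        simp at hpi
        rw [hcn]
        cases (c N).val.testBit b
        · simp [hpi]
        · simp [Nat.testBit_or, Nat.one_shiftLeft]
      · have hlt : decide (i < n + 1) = decide (i < n) := by
          rw [decide_eq_decide]; omega
        rw [hlt, ← hp i]
        cases (c N).val.testBit b
        · simp
        · simp [Nat.testBit_or, Nat.one_shiftLeft, Nat.testBit_two_pow, Ne.symm hin]
    intro i
    exact ⟨hset p 0 (fun i => (hi i).1) i, hset q 1 (fun i => (hi i).2) i⟩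

theorem kProper (c : Fin 12 → Fin 4) (hc : IsProper4Coloring gstarG c) :
    ∃ x, kRep c x ∧ kFinal x.1 x.2 = true := by
  refine kChk_ok c hc 12 0 0 0 rfl ?_ kChk_true
  intro i
  simp

theorem kPairEq_eq {x y : ℕ × ℕ} (h : kPairEq x y = true) : x = y := by
  have hcond : ∀ a b : Bool, cond a b false = true ↔ a = true ∧ b = true := by decide
  unfold kPairEq at h
  rw [hcond] at h
  exact Prod.ext (Nat.eq_of_beq_eq_true h.1) (Nat.eq_of_beq_eq_true h.2)

theorem kMem_to (r x : ℕ × ℕ) (l : List (ℕ × ℕ)) (h : kAllTo r l = true) (hx : kMem x l = true) :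
    kRun kWord2 x = r := by
  have hcond : ∀ a b : Bool, cond a b false = true ↔ a = true ∧ b = true := by decide
  induction l with
  | nil => cases hx
  | cons y l ih =>
    unfold kAllTo at h
    rw [hcond] at h
    unfold kMem at hx
    cases he : kPairEq x y
    · rw [he] at hx
      exact ih h.2 hx
    · rw [kPairEq_eq he]
      exact kPairEq_eq h.1

theorem kEqb_iff {c : Fin 12 → Fin 4} {x : ℕ × ℕ} (h : kRep c x) :
    kEqb x.1 x.2 = decide (c 2 = c 5) := by
  have hb : kEqb x.1 x.2 = cond (kBit (x.1 ^^^ (x.1 >>> 3)) 2) false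
    (cond (kBit (x.2 ^^^ (x.2 >>> 3)) 2) false true) := rfl
  rw [hb, kBit_eq, kBit_eq, Nat.testBit_xor, Nat.testBit_xor, Nat.testBit_shiftRight,
    Nat.testBit_shiftRight, (h 2).1, (h 2).2, (h (3 + 2)).1, (h (3 + 2)).2]
  have e2 : ∀ b, kCb c b 2 = (c 2).val.testBit b := fun b => kCb_lt c b 2
  have e5 : ∀ b, kCb c b (3 + 2) = (c 5).val.testBit b := fun b => kCb_lt c b 5
  simp only [e2, e5]
  generalize c 2 = a
  generalize c 5 = b
  revert a b
  decide

theorem kToRoot (c : Fin 12 → Fin 4) (hc : IsProper4Coloring gstarG c) :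
    ∃ d, KempeEquiv gstarG c d ∧ kRep d (if c 2 = c 5 then kRootB else kRootA) := by
  have hcond : ∀ a b : Bool, cond a b false = true ↔ a = true ∧ b = true := by decide
  obtain ⟨x, hx, hf⟩ := kProper c hc
  unfold kFinal at hf
  rw [hcond, kEqb_iff hx] at hf
  obtain ⟨c1, e1, r1⟩ := kRun_ok kWord1 hx
  obtain ⟨c2, e2, r2⟩ := kRun_ok kWord2 r1
  refine ⟨c2, Relation.EqvGen.trans _ _ _ e1 e2, ?_⟩
  by_cases h : c 2 = c 5
  · rw [if_pos h, ← kMem_to kRootB _ kListB kAllToB (by simpa [h] using hf.2)]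
    exact r2
  · rw [if_neg h, ← kMem_to kRootA _ kListA kAllToA (by simpa [h] using hf.2)]
    exact r2

theorem kEquiv_of (c d : Fin 12 → Fin 4) (hc : IsProper4Coloring gstarG c)
    (hd : IsProper4Coloring gstarG d) (h : c 2 = c 5 ↔ d 2 = d 5) : KempeEquiv gstarG c d := by
  obtain ⟨c1, e1, r1⟩ := kToRoot c hc
  obtain ⟨d1, e2, r2⟩ := kToRoot d hd
  simp only [h] at r1
  have := kRep_inj r1 r2
  subst this
  exact Relation.EqvGen.trans _ _ _ e1 (Relation.EqvGen.symm _ _ e2)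

theorem kSwapInj (j k a b : Fin 4) (hjk : j ≠ k) (ha : a = j ∨ a = k) (hb : b = j ∨ b = k) :
    ((if a = j then k else j) = (if b = j then k else j)) ↔ a = b := by
  revert j k a b
  decide

theorem kSwapMem (j k a : Fin 4) :
    (if a = j then k else j) = j ∨ (if a = j then k else j) = k := by
  split_ifs <;> simp

theorem kStep_closed {c c' : Fin 12 → Fin 4} (h : KempeStep gstarG c c') :
    ∃ j k : Fin 4, j ≠ k ∧ ∃ U : Set (Fin 12),
      (∀ a ∈ U, c a = j ∨ c a = k) ∧
      (∀ a ∈ U, ∀ b, gstarG.Adj a b → (c b = j ∨ c b = k) → b ∈ U) ∧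
      (∀ w ∈ U, c' w = if c w = j then k else j) ∧ (∀ w, w ∉ U → c' w = c w) := by
  obtain ⟨j, k, hjk, U, _, hsub, _, hcl, h1, h2⟩ := h
  refine ⟨j, k, hjk, U, hsub, ?_, h1, h2⟩
  intro a ha b hab hb
  refine hcl a ha b ⟨SimpleGraph.Walk.cons hab SimpleGraph.Walk.nil, ?_⟩
  intro w hw
  simp at hw
  rcases hw with rfl | rfl
  · exact hsub ha
  · exact hb

theorem kStep_proper {c c' : Fin 12 → Fin 4} (h : KempeStep gstarG c c') :
    IsProper4Coloring gstarG c ↔ IsProper4Coloring gstarG c' := by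
  obtain ⟨j, k, hjk, U, hsub, hcl, h1, h2⟩ := kStep_closed h
  have main : ∀ a b, gstarG.Adj a b → (c a = c b ↔ c' a = c' b) := by
    have mixed : ∀ a b, gstarG.Adj a b → a ∈ U → b ∉ U → (c a = c b ↔ c' a = c' b) := by
      intro a b hab ha hb
      have hb' : ¬ (c b = j ∨ c b = k) := fun hh => hb (hcl a ha b hab hh)
      rw [h1 a ha, h2 b hb]
      constructor
      · intro he
        exact absurd (he ▸ hsub a ha) hb'
      · intro he
        exact absurd (he ▸ kSwapMem j k (c a)) hb'
    intro a b hab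
    by_cases ha : a ∈ U
    · by_cases hb : b ∈ U
      · rw [h1 a ha, h1 b hb]
        exact (kSwapInj j k _ _ hjk (hsub a ha) (hsub b hb)).symm
      · exact mixed a b hab ha hb
    · by_cases hb : b ∈ U
      · rw [eq_comm, mixed b a hab.symm hb ha, eq_comm]
      · rw [h2 a ha, h2 b hb]
  constructor
  · intro hp a b hab he
    exact hp a b hab ((main a b hab).2 he)
  · intro hp a b hab he
    exact hp a b hab ((main a b hab).1 he)

theorem kStep_inv {c c' : Fin 12 → Fin 4} (h : KempeStep gstarG c c')
    (hc : IsProper4Coloring gstarG c) : c 2 = c 5 ↔ c' 2 = c' 5 := by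
  have hcond : ∀ a b : Bool, cond a b false = true ↔ a = true ∧ b = true := by decide
  obtain ⟨x, hx, hf⟩ := kProper c hc
  unfold kFinal at hf
  rw [hcond] at hf
  obtain ⟨j, k, hjk, U, hsub, hcl, h1, h2⟩ := kStep_closed h
  have hl := fun a b => kLink_iff hx hf.1 j k hjk a b U hsub hcl
  by_cases m2 : (2 : Fin 12) ∈ U
  · by_cases m5 : (5 : Fin 12) ∈ U
    · rw [h1 _ m2, h1 _ m5]
      exact (kSwapInj j k _ _ hjk (hsub _ m2) (hsub _ m5)).symm
    · have hb' : ¬ (c 5 = j ∨ c 5 = k) := fun hh => m5 ((hl (hsub _ m2) hh).1 m2)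
      rw [h1 _ m2, h2 _ m5]
      constructor
      · intro he
        exact absurd (he ▸ hsub _ m2) hb'
      · intro he
        exact absurd (he ▸ kSwapMem j k (c 2)) hb'
  · by_cases m5 : (5 : Fin 12) ∈ U
    · have hb' : ¬ (c 2 = j ∨ c 2 = k) := fun hh => m2 ((hl hh (hsub _ m5)).2 m5)
      rw [h2 _ m2, h1 _ m5]
      constructor
      · intro he
        exact absurd (he ▸ hsub _ m5) hb'
      · intro he
        exact absurd (he ▸ kSwapMem j k (c 5)) hb'
    · rw [h2 _ m2, h2 _ m5]

theorem kEquiv_inv {c c' : Fin 12 → Fin 4} (h : KempeEquiv gstarG c c') :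
    (IsProper4Coloring gstarG c ↔ IsProper4Coloring gstarG c') ∧
    (IsProper4Coloring gstarG c → (c 2 = c 5 ↔ c' 2 = c' 5)) := by
  induction h with
  | rel a b h => exact ⟨kStep_proper h, kStep_inv h⟩
  | refl a => exact ⟨Iff.rfl, fun _ => Iff.rfl⟩
  | symm a b _ ih => exact ⟨ih.1.symm, fun hb => (ih.2 (ih.1.2 hb)).symm⟩
  | trans a b d _ _ ih1 ih2 =>
    exact ⟨ih1.1.trans ih2.1, fun ha => (ih1.2 ha).trans (ih2.2 (ih1.1.1 ha))⟩

theorem kProper_of (c : Fin 12 → Fin 4)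
    (h : ∀ a b : Fin 12, kBit (kNb b) a = true → c a ≠ c b) : IsProper4Coloring gstarG c := by
  intro a b hab
  rw [kAdj, ← kBit_eq] at hab
  exact h a b hab

def kA1 : Fin 12 → Fin 4 := ![0, 0, 1, 2, 1, 2, 2, 0, 3, 0, 3, 1]
def kA2 : Fin 12 → Fin 4 := ![0, 1, 2, 1, 2, 3, 3, 0, 3, 0, 2, 1]
def kB1 : Fin 12 → Fin 4 := ![0, 0, 1, 2, 3, 1, 2, 3, 0, 2, 3, 1]
def kB2 : Fin 12 → Fin 4 := ![0, 1, 2, 1, 3, 2, 0, 3, 0, 1, 3, 2]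

theorem kA1_proper : IsProper4Coloring gstarG kA1 := kProper_of _ (by decide +kernel)
theorem kA2_proper : IsProper4Coloring gstarG kA2 := kProper_of _ (by decide +kernel)
theorem kB1_proper : IsProper4Coloring gstarG kB1 := kProper_of _ (by decide +kernel)
theorem kB2_proper : IsProper4Coloring gstarG kB2 := kProper_of _ (by decide +kernel)

/-- The parented a-graph `G*_uv` (icosahedron minus the edge `uv`, with
the pair `(u, v) = (0, 1)` designated) does not belong to `A*`: each of the two Kempe
equivalence classes of its coloring states contains both a state with `c u = c v` and
a state with `c u ≠ c v`. -/
theorem stmt_15 :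
    ¬ NoNSClass gstarG gstarU gstarV ∧
    ∃ A B : Set (Fin 12 → Fin 4),
      (∀ c ∈ A, IsProper4Coloring gstarG c) ∧
      (∀ c ∈ B, IsProper4Coloring gstarG c) ∧
      (∀ c : Fin 12 → Fin 4, IsProper4Coloring gstarG c → c ∈ A ∨ c ∈ B) ∧
      (∀ c ∈ A, c ∉ B) ∧
      (∀ c ∈ A, ∀ c' ∈ A, KempeEquiv gstarG c c') ∧
      (∀ c ∈ B, ∀ c' ∈ B, KempeEquiv gstarG c c') ∧
      (∀ c ∈ A, ∀ c' ∈ B, ¬ KempeEquiv gstarG c c') ∧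
      (∃ c ∈ A, c gstarU = c gstarV) ∧ (∃ c ∈ A, c gstarU ≠ c gstarV) ∧
      (∃ c ∈ B, c gstarU = c gstarV) ∧ (∃ c ∈ B, c gstarU ≠ c gstarV) := by
  constructor
  · intro h
    have := h kA1 kA2 kA1_proper kA2_proper
      (kEquiv_of _ _ kA1_proper kA2_proper (by decide))
    revert this
    decide
  refine ⟨{c | IsProper4Coloring gstarG c ∧ c 2 ≠ c 5}, {c | IsProper4Coloring gstarG c ∧ c 2 = c 5},
    fun c hc => hc.1, fun c hc => hc.1, ?_, fun c hc hc' => hc.2 hc'.2, ?_, ?_, ?_,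
    ⟨kA1, ⟨kA1_proper, by decide⟩, by decide⟩, ⟨kA2, ⟨kA2_proper, by decide⟩, by decide⟩,
    ⟨kB1, ⟨kB1_proper, by decide⟩, by decide⟩, ⟨kB2, ⟨kB2_proper, by decide⟩, by decide⟩⟩
  · intro c hc
    by_cases h : c 2 = c 5
    · exact Or.inr ⟨hc, h⟩
    · exact Or.inl ⟨hc, h⟩
  · intro c hc d hd
    exact kEquiv_of c d hc.1 hd.1 (iff_of_false hc.2 hd.2)
  · intro c hc d hd
    exact kEquiv_of c d hc.1 hd.1 (iff_of_true hc.2 hd.2)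
  · intro c hc d hd he
    exact hc.2 (((kEquiv_inv he).2 hc.1).2 hd.2)
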